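/- Let π : (X,T) → (Y,S) be a factor map between topological dynamical systems, F = {f_n} ∈ S_X a subadditive sequence, U a finite open cover of X, ν ∈ M(Y,S), and k ∈ ℕ. Then for ν-almost every y ∈ Y, P(T^k, F_k, U_0^{k-1}, y) = k · P(T,F,U,y), where F_k := {f_{nk} : n ∈ ℕ} (a subadditive sequence for T^k), U_0^{k-1} = ⋁_{i=0}^{k-1} T^{-i}U, and the left-hand pressure is computed for the factor map π : (X,T^k) → (Y,S^k). -/

import Mathlib

/-!
The equality is shown at every `y`.

Write `a n = log P_n(T,F,U,y)`. Since `(U_0^{k-1})_0^{n-1}` formed with `T^k` is `U_0^{nk-1}`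
(`dynCover_iterate`), the left-hand side is the limsup of `a (n * k) / n`. This is a rescaled
subsequence of `a n / n`, so it is at most `k` times the limsup of the whole sequence. For the
converse, subadditivity of `F` and boundedness of `f 1` give `P_{n+1} ≤ K * P_n` for `n ≥ 1`,
with `K ≥ 1` independent of `n` and `y` (`PnFiber_succ_le`); hence `a (q * k + r) ≤ a (q * k) + k * log K` for
`q ≥ 1` and `r < k`, and the subsequence controls the whole sequence.

The limsup is taken in `ℝ`, where it is the infimum of the set of eventual upper bounds and has
the junk value `0` when `a n / n → -∞`. `limsup_mul_eq` therefore compares the two sets of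
eventual upper bounds: they agree up to the factor `k` and an arbitrary `ε > 0`, which also makes
both sides take the junk value together.
-/

open MeasureTheory Filter Topology Set
open scoped Classical

noncomputable section

namespace RelLocVP

variable {X Y Z : Type*}

/-- A finite cover of `X` by Borel (measurable) sets. -/
def IsBorelCover [MeasurableSpace X] (U : Finset (Set X)) : Prop :=
  (∀ A ∈ U, MeasurableSet A) ∧ ⋃₀ (U : Set (Set X)) = Set.univ

/-- A finite Borel partition of `X`. -/
def IsPartition [MeasurableSpace X] (α : Finset (Set X)) : Prop :=
  (∀ A ∈ α, MeasurableSet A) ∧ ⋃₀ (α : Set (Set X)) = Set.univ ∧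
    ∀ A ∈ α, ∀ B ∈ α, A ≠ B → Disjoint A B

/-- A finite open cover of `X`. -/
def IsOpenCover [TopologicalSpace X] (U : Finset (Set X)) : Prop :=
  (∀ A ∈ U, IsOpen A) ∧ ⋃₀ (U : Set (Set X)) = Set.univ

/-- `V` refines `U` (`V ⪰ U`): every member of `V` is contained in some member of `U`. -/
def Refines (V U : Finset (Set X)) : Prop := ∀ v ∈ V, ∃ u ∈ U, v ⊆ u

/-- The join `U ∨ V` of two finite covers. -/
def coverJoin (U V : Finset (Set X)) : Finset (Set X) := Finset.image₂ (· ∩ ·) U V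

/-- `U_0^{n-1} = ⋁_{i=0}^{n-1} T^{-i} U`. -/
def dynCover (T : X → X) (U : Finset (Set X)) : ℕ → Finset (Set X)
  | 0 => {Set.univ}
  | n + 1 => coverJoin (dynCover T U n) (U.image fun u => T^[n] ⁻¹' u)

/-- A subadditive sequence of continuous potentials (indices `n ≥ 1` are the relevant ones):
`f (m+n) ≤ f m + f n ∘ T^[m]`. -/
def IsSubadditiveSeq [TopologicalSpace X] (T : X → X) (f : ℕ → X → ℝ) : Prop :=
  (∀ n, 1 ≤ n → Continuous (f n)) ∧
    ∀ m n, 1 ≤ m → 1 ≤ n → ∀ x, f (m + n) x ≤ f m x + f n (T^[m] x)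

/-- Supremum norm of a function. -/
def supNorm (g : X → ℝ) : ℝ := ⨆ x : X, |g x|

/-- `μ(F) = lim_n (1/n) ∫ f_n dμ = inf_n (1/n) ∫ f_n dμ` (the two agree by subadditivity). -/
def seqAvg [MeasurableSpace X] (μ : Measure X) (f : ℕ → X → ℝ) : ℝ :=
  ⨅ n : ℕ, ((n : ℝ) + 1)⁻¹ * ∫ x, f (n + 1) x ∂μ

/-- `P_n(T,F,U,y)`: infimum over finite Borel covers `V` refining `U_0^{n-1}` of
`Σ_{v ∈ V} sup_{x ∈ v ∩ π⁻¹ y} exp (f_n x)` (the sup over an empty set being `0`,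
which is Mathlib's convention for `sSup ∅` in `ℝ`). -/
def PnFiber [MeasurableSpace X] (T : X → X) (π : X → Y) (f : ℕ → X → ℝ)
    (U : Finset (Set X)) (n : ℕ) (y : Y) : ℝ :=
  sInf { r : ℝ | ∃ V : Finset (Set X), IsBorelCover V ∧ Refines V (dynCover T U n) ∧
      r = ∑ v ∈ V, sSup ((fun x => Real.exp (f n x)) '' (v ∩ π ⁻¹' {y})) }

/-- `P(T,F,U,y) = limsup_n (1/n) log P_n(T,F,U,y)`. -/
def PFiber [MeasurableSpace X] (T : X → X) (π : X → Y) (f : ℕ → X → ℝ)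
    (U : Finset (Set X)) (y : Y) : ℝ :=
  Filter.limsup (fun n : ℕ => (n : ℝ)⁻¹ * Real.log (PnFiber T π f U n y)) Filter.atTop

/-- `P_n(T,F,U,Y) = sup_{ y ∈ Y } P_n(T,F,U,y)`. -/
def PnSup [MeasurableSpace X] (T : X → X) (π : X → Y) (f : ℕ → X → ℝ)
    (U : Finset (Set X)) (n : ℕ) : ℝ :=
  ⨆ y : Y, PnFiber T π f U n y

/-- `P(T,F,U|Y) = lim_n (1/n) log P_n(T,F,U,Y) = inf_n (1/n) log P_n(T,F,U,Y)`. -/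
def PCond [MeasurableSpace X] (T : X → X) (π : X → Y) (f : ℕ → X → ℝ)
    (U : Finset (Set X)) : ℝ :=
  ⨅ n : ℕ, ((n : ℝ) + 1)⁻¹ * Real.log (PnSup T π f U (n + 1))

section Entropy

variable [MeasurableSpace X] [MeasurableSpace Y]

/-- Conditional entropy `H_μ(α | m) = Σ_{A ∈ α} ∫ -E(1_A|m) log E(1_A|m) dμ`
of a finite partition `α` relative to a sub-σ-algebra `m`. -/
def condEntPartition (μ : Measure X) (m : MeasurableSpace X) (α : Finset (Set X)) : ℝ :=
  ∑ A ∈ α, ∫ x, Real.negMulLog ((μ[A.indicator (fun _ => (1 : ℝ)) | m]) x) ∂μ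

/-- `H_μ(U | Y)`: infimum of `H_μ(α | π⁻¹ B(Y))` over finite Borel partitions `α` refining `U`. -/
def HCond (μ : Measure X) (π : X → Y) (U : Finset (Set X)) : ℝ :=
  sInf { r : ℝ | ∃ α : Finset (Set X), IsPartition α ∧ Refines α U ∧
      r = condEntPartition μ (MeasurableSpace.comap π inferInstance) α }

/-- `h_μ(T,α|Y) = lim_n (1/n) H_μ(α_0^{n-1} | π⁻¹ B(Y))` (equals the infimum by subadditivity). -/
def hPart (T : X → X) (μ : Measure X) (π : X → Y) (α : Finset (Set X)) : ℝ :=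
  ⨅ n : ℕ, ((n : ℝ) + 1)⁻¹ *
    condEntPartition μ (MeasurableSpace.comap π inferInstance) (dynCover T α (n + 1))

/-- `h_μ(T,U|Y) = lim_n (1/n) H_μ(U_0^{n-1}|Y)` (equals the infimum by subadditivity). -/
def hCond (T : X → X) (μ : Measure X) (π : X → Y) (U : Finset (Set X)) : ℝ :=
  ⨅ n : ℕ, ((n : ℝ) + 1)⁻¹ * HCond μ π (dynCover T U (n + 1))

/-- `h_μ^+(T,U|Y)`: infimum of `h_μ(T,α|Y)` over finite Borel partitions `α` refining `U`. -/
def hPlus (T : X → X) (μ : Measure X) (π : X → Y) (U : Finset (Set X)) : ℝ :=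
  sInf { r : ℝ | ∃ α : Finset (Set X), IsPartition α ∧ Refines α U ∧ r = hPart T μ π α }

end Entropy

variable [MetricSpace X] [CompactSpace X] [MeasurableSpace X] [BorelSpace X]
variable [MetricSpace Y] [CompactSpace Y] [MeasurableSpace Y] [BorelSpace Y]

/-! ### Iterated joins of covers -/

theorem mem_coverJoin {α : Type*} {U V : Finset (Set α)} {A : Set α} :
    A ∈ coverJoin U V ↔ ∃ u ∈ U, ∃ v ∈ V, u ∩ v = A := by
  simp [coverJoin, Finset.mem_image₂]

theorem dynCover_add {α : Type*} (T : α → α) (U : Finset (Set α)) (a b : ℕ) :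
    dynCover T U (a + b) =
      coverJoin (dynCover T U a) ((dynCover T U b).image fun u => T^[a] ⁻¹' u) := by
  induction b with
  | zero =>
    ext A
    simp [dynCover, mem_coverJoin]
  | succ b ih =>
    rw [← add_assoc, dynCover, ih, dynCover]
    ext A
    simp only [mem_coverJoin, Finset.mem_image]
    constructor
    · rintro ⟨_, ⟨p, hp, _, ⟨q, hq, rfl⟩, rfl⟩, _, ⟨u, hu, rfl⟩, rfl⟩
      refine ⟨p, hp, _, ⟨_, ⟨q, hq, _, ⟨u, hu, rfl⟩, rfl⟩, rfl⟩, ?_⟩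
      rw [add_comm a b, Function.iterate_add, Set.preimage_comp, Set.preimage_inter,
        Set.inter_assoc]
    · rintro ⟨p, hp, _, ⟨_, ⟨q, hq, _, ⟨u, hu, rfl⟩, rfl⟩, rfl⟩, rfl⟩
      refine ⟨_, ⟨p, hp, _, ⟨q, hq, rfl⟩, rfl⟩, _, ⟨u, hu, rfl⟩, ?_⟩
      rw [add_comm a b, Function.iterate_add, Set.preimage_comp, Set.preimage_inter,
        Set.inter_assoc]

theorem dynCover_iterate {α : Type*} (T : α → α) (U : Finset (Set α)) (k n : ℕ) :
    dynCover (T^[k]) (dynCover T U k) n = dynCover T U (n * k) := by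
  induction n with
  | zero => simp [dynCover]
  | succ n ih =>
    rw [dynCover, ih, Nat.succ_mul, dynCover_add, ← Function.iterate_mul, mul_comm k n]

theorem isBorelCover_join {α : Type*} [MeasurableSpace α] {U V : Finset (Set α)}
    (hU : IsBorelCover U) (hV : IsBorelCover V) : IsBorelCover (coverJoin U V) := by
  constructor
  · intro A hA
    obtain ⟨u, hu, v, hv, rfl⟩ := mem_coverJoin.1 hA
    exact (hU.1 u hu).inter (hV.1 v hv)
  · refine Set.eq_univ_of_forall fun x => ?_
    obtain ⟨u, hu, hxu⟩ : x ∈ ⋃₀ (U : Set (Set α)) := hU.2 ▸ Set.mem_univ x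
    obtain ⟨v, hv, hxv⟩ : x ∈ ⋃₀ (V : Set (Set α)) := hV.2 ▸ Set.mem_univ x
    exact ⟨u ∩ v, Finset.mem_coe.2 (mem_coverJoin.2 ⟨u, hu, v, hv, rfl⟩), hxu, hxv⟩

theorem isBorelCover_preimage {α : Type*} [MeasurableSpace α] {g : α → α} (hg : Measurable g)
    {U : Finset (Set α)} (hU : IsBorelCover U) : IsBorelCover (U.image fun u => g ⁻¹' u) := by
  constructor
  · intro A hA
    obtain ⟨u, hu, rfl⟩ := Finset.mem_image.1 hA
    exact hg (hU.1 u hu)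
  · refine Set.eq_univ_of_forall fun x => ?_
    obtain ⟨u, hu, hxu⟩ : g x ∈ ⋃₀ (U : Set (Set α)) := hU.2 ▸ Set.mem_univ (g x)
    exact ⟨g ⁻¹' u, Finset.mem_coe.2 (Finset.mem_image_of_mem _ hu), hxu⟩

theorem isBorelCover_dynCover {α : Type*} [MeasurableSpace α] {T : α → α} (hT : Measurable T)
    {U : Finset (Set α)} (hU : IsBorelCover U) (n : ℕ) : IsBorelCover (dynCover T U n) := by
  induction n with
  | zero => simp [dynCover, IsBorelCover]
  | succ n ih => exact isBorelCover_join ih (isBorelCover_preimage (hT.iterate n) hU)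

/-! ### Positivity and one-step growth of the fibre sums -/

/-- The set whose infimum is `PnFiber T π f U n y`. -/
def fiberSums {α β : Type*} [MeasurableSpace α] (T : α → α) (π : α → β) (f : ℕ → α → ℝ)
    (U : Finset (Set α)) (n : ℕ) (y : β) : Set ℝ :=
  { r : ℝ | ∃ V : Finset (Set α), IsBorelCover V ∧ Refines V (dynCover T U n) ∧
      r = ∑ v ∈ V, sSup ((fun x => Real.exp (f n x)) '' (v ∩ π ⁻¹' {y})) }

theorem sSup_exp_nonneg {α : Type*} (g : α → ℝ) (s : Set α) :
    0 ≤ sSup ((fun x => Real.exp (g x)) '' s) := by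
  apply Real.sSup_nonneg
  rintro _ ⟨x, _, rfl⟩
  exact (Real.exp_pos _).le

theorem bddAbove_exp_image {α : Type*} [TopologicalSpace α] [CompactSpace α] {g : α → ℝ}
    (hg : Continuous g) (s : Set α) : BddAbove ((fun x => Real.exp (g x)) '' s) :=
  (isCompact_range (Real.continuous_exp.comp hg)).bddAbove.mono (by
    rintro _ ⟨x, _, rfl⟩
    exact ⟨x, rfl⟩)

theorem fiberSums_nonempty {α β : Type*} [MeasurableSpace α] {T : α → α} (hT : Measurable T)
    (π : α → β) (f : ℕ → α → ℝ) {U : Finset (Set α)} (hU : IsBorelCover U) (n : ℕ) (y : β) :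
    (fiberSums T π f U n y).Nonempty :=
  ⟨_, dynCover T U n, isBorelCover_dynCover hT hU n, fun v hv => ⟨v, hv, subset_rfl⟩, rfl⟩

/-- Any point `x` of the fibre lies in some member of any cover, so `exp (f n x)` is a lower
bound for every sum in the definition of `P_n`. -/
theorem exp_le_of_mem_fiberSums {α β : Type*} [TopologicalSpace α] [CompactSpace α]
    [MeasurableSpace α] {T : α → α} {π : α → β} {f : ℕ → α → ℝ} {U : Finset (Set α)} {n : ℕ}
    (hf : Continuous (f n)) {y : β} {x : α} (hx : π x = y) {r : ℝ}
    (hr : r ∈ fiberSums T π f U n y) : Real.exp (f n x) ≤ r := by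
  obtain ⟨V, hV, -, rfl⟩ := hr
  obtain ⟨v, hv, hxv⟩ : x ∈ ⋃₀ (V : Set (Set α)) := hV.2 ▸ Set.mem_univ x
  calc Real.exp (f n x)
      ≤ sSup ((fun x => Real.exp (f n x)) '' (v ∩ π ⁻¹' {y})) :=
        le_csSup (bddAbove_exp_image hf _) ⟨x, ⟨hxv, hx⟩, rfl⟩
    _ ≤ _ := Finset.single_le_sum
        (f := fun v => sSup ((fun x => Real.exp (f n x)) '' (v ∩ π ⁻¹' {y})))
        (fun v _ => sSup_exp_nonneg _ _) (Finset.mem_coe.1 hv)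

theorem PnFiber_pos {α β : Type*} [TopologicalSpace α] [CompactSpace α]
    [MeasurableSpace α] {T : α → α} (hT : Measurable T) {π : α → β}
    (hπ : Function.Surjective π) {f : ℕ → α → ℝ} {U : Finset (Set α)} (hU : IsBorelCover U)
    {n : ℕ} (hf : Continuous (f n)) (y : β) : 0 < PnFiber T π f U n y := by
  obtain ⟨x, hx⟩ := hπ y
  exact (Real.exp_pos (f n x)).trans_le
    (le_csInf (fiberSums_nonempty hT π f hU n y) fun r hr => exp_le_of_mem_fiberSums hf hx hr)

/-- If `V ⪰ U_0^{n-1}` then `V ∨ T^{-n}U ⪰ U_0^n`, and joining with `T^{-n}U` multiplies the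
number of cells by at most `|U|`, while `f (n+1) ≤ f n + M` by subadditivity. -/
theorem PnFiber_succ_le {α β : Type*} [TopologicalSpace α] [CompactSpace α]
    [MeasurableSpace α] {T : α → α} (hT : Measurable T) {π : α → β}
    {f : ℕ → α → ℝ} (hf : IsSubadditiveSeq T f) {U : Finset (Set α)} (hU : IsBorelCover U)
    {M : ℝ} (hM : ∀ x, f 1 x ≤ M) {n : ℕ} (hn : 1 ≤ n) (y : β) :
    PnFiber T π f U (n + 1) y ≤ PnFiber T π f U n y * ((U.card + 1) * Real.exp M) := by
  have hK : 0 < ((U.card : ℝ) + 1) * Real.exp M := by positivity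
  rw [← div_le_iff₀ hK]
  refine le_csInf (fiberSums_nonempty hT π f hU n y) ?_
  rintro _ ⟨V, hV, hVr, rfl⟩
  rw [div_le_iff₀ hK]
  set G : ℕ → Set α → ℝ := fun m v => sSup ((fun x => Real.exp (f m x)) '' (v ∩ π ⁻¹' {y}))
    with hG
  have hcell : ∀ v u : Set α, G (n + 1) (v ∩ u) ≤ G n v * Real.exp M := by
    intro v u
    refine Real.sSup_le ?_ (mul_nonneg (sSup_exp_nonneg _ _) (Real.exp_pos M).le)
    rintro _ ⟨x, ⟨⟨hxv, -⟩, hxy⟩, rfl⟩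
    have h1 : Real.exp (f n x) ≤ G n v :=
      le_csSup (bddAbove_exp_image (hf.1 n hn) _) ⟨x, ⟨hxv, hxy⟩, rfl⟩
    calc Real.exp (f (n + 1) x) ≤ Real.exp (f n x + M) :=
          Real.exp_le_exp.2 ((hf.2 n 1 hn le_rfl x).trans (by gcongr; exact hM _))
      _ = Real.exp (f n x) * Real.exp M := Real.exp_add _ _
      _ ≤ _ := by gcongr
  set W := U.image fun u => T^[n] ⁻¹' u with hW
  have hmem : ∑ w ∈ coverJoin V W, G (n + 1) w ∈ fiberSums T π f U (n + 1) y := by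
    refine ⟨_, isBorelCover_join hV (isBorelCover_preimage (hT.iterate n) hU), ?_, rfl⟩
    intro A hA
    obtain ⟨v, hv, w, hw, rfl⟩ := mem_coverJoin.1 hA
    obtain ⟨u, hu, hvu⟩ := hVr v hv
    exact ⟨u ∩ w, mem_coverJoin.2 ⟨u, hu, w, hw, rfl⟩, Set.inter_subset_inter_left _ hvu⟩
  have hbdd : BddBelow (fiberSums T π f U (n + 1) y) := by
    refine ⟨0, ?_⟩
    rintro _ ⟨_, -, -, rfl⟩
    exact Finset.sum_nonneg fun _ _ => sSup_exp_nonneg _ _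
  calc PnFiber T π f U (n + 1) y ≤ ∑ w ∈ coverJoin V W, G (n + 1) w := csInf_le hbdd hmem
    _ ≤ ∑ p ∈ V ×ˢ W, G (n + 1) (p.1 ∩ p.2) := by
        have : coverJoin V W = (V ×ˢ W).image fun p => p.1 ∩ p.2 := rfl
        rw [this]
        exact Finset.sum_image_le_of_nonneg fun _ _ => sSup_exp_nonneg _ _
    _ = ∑ v ∈ V, ∑ w ∈ W, G (n + 1) (v ∩ w) := Finset.sum_product _ _ _
    _ ≤ ∑ v ∈ V, ∑ w ∈ W, G n v * Real.exp M :=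
        Finset.sum_le_sum fun v _ => Finset.sum_le_sum fun w _ => hcell v w
    _ = (∑ v ∈ V, G n v) * (W.card * Real.exp M) := by
        rw [Finset.sum_mul]
        refine Finset.sum_congr rfl fun v _ => ?_
        rw [Finset.sum_const, nsmul_eq_mul]
        ring
    _ ≤ (∑ v ∈ V, G n v) * ((U.card + 1) * Real.exp M) := by
        have h0 : 0 ≤ ∑ v ∈ V, G n v := Finset.sum_nonneg fun _ _ => sSup_exp_nonneg _ _
        have h1 : (W.card : ℝ) ≤ U.card + 1 := by
          exact_mod_cast (Finset.card_image_le).trans (Nat.le_succ _)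
        gcongr

/-! ### Limsup along multiples of `k` -/

/-- A sequence whose increments are bounded above by `L` from index `1` on has its growth rate determined
along the multiples of `k`. The limsups are those of `ℝ`; no lower bound on `a n / n` is
needed, since the two sides take the junk value `0` together. -/
theorem limsup_mul_eq (a : ℕ → ℝ) {L : ℝ} (hL : 0 ≤ L)
    (ha : ∀ n, 1 ≤ n → a (n + 1) ≤ a n + L) {k : ℕ} (hk : 1 ≤ k) :
    limsup (fun n : ℕ => (n : ℝ)⁻¹ * a (n * k)) atTop
      = (k : ℝ) * limsup (fun n : ℕ => (n : ℝ)⁻¹ * a n) atTop := by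
  have hk0 : (0 : ℝ) < k := by exact_mod_cast hk
  have hstep : ∀ n, 1 ≤ n → ∀ r : ℕ, a (n + r) ≤ a n + r * L := by
    intro n hn r
    induction r with
    | zero => simp
    | succ r ih =>
      have := ha (n + r) (by omega)
      rw [← add_assoc]
      push_cast
      linarith
  rw [limsup_eq, limsup_eq]
  set A := {b : ℝ | ∀ᶠ n : ℕ in atTop, (n : ℝ)⁻¹ * a n ≤ b} with hA
  set B := {b : ℝ | ∀ᶠ n : ℕ in atTop, (n : ℝ)⁻¹ * a (n * k) ≤ b} with hB
  have hAB : ∀ b ∈ A, (k : ℝ) * b ∈ B := by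
    intro b hb
    have htend : Tendsto (fun n : ℕ => n * k) atTop atTop :=
      tendsto_id.atTop_mul_const' (by omega)
    filter_upwards [htend.eventually hb, eventually_ge_atTop 1] with n hn hn1
    have hn0 : (0 : ℝ) < n := by exact_mod_cast hn1
    push_cast at hn
    calc (n : ℝ)⁻¹ * a (n * k) = k * (((n : ℝ) * k)⁻¹ * a (n * k)) := by field_simp
      _ ≤ k * b := by gcongr
  have hBA : ∀ b ∈ B, ∀ ε > 0, b / k + ε ∈ A := by
    intro b hb ε hε
    obtain ⟨Q, hQ⟩ := eventually_atTop.1 hb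
    obtain ⟨N, hN⟩ := exists_nat_ge ((|b| + k * L) / ε)
    filter_upwards [eventually_ge_atTop ((Q + 1) * k), eventually_ge_atTop N] with n hn hnN
    have hq : Q + 1 ≤ n / k := (Nat.le_div_iff_mul_le (by omega)).2 hn
    set q := n / k with hqdef
    set r := n % k with hrdef
    have hnqr : n = q * k + r := by rw [mul_comm]; exact (Nat.div_add_mod n k).symm
    have hrk : (r : ℝ) ≤ k := by exact_mod_cast (Nat.mod_lt n (by omega)).le
    have hq0 : (0 : ℝ) < q := by exact_mod_cast (by omega : 0 < q)
    have hr0 : (0 : ℝ) ≤ r := by positivity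
    have hnR : (n : ℝ) = q * k + r := by exact_mod_cast hnqr
    have hn0 : (0 : ℝ) < n := by rw [hnR]; positivity
    have h1 : a (q * k) ≤ q * b := by
      have := hQ q (by omega)
      rwa [inv_mul_le_iff₀ hq0] at this
    have h2 : a n ≤ a (q * k) + r * L := by
      rw [hnqr]
      exact hstep _ (Nat.mul_pos (by omega) (by omega)) _
    have h3 : |b| + k * L ≤ n * ε := by
      rw [div_le_iff₀ hε] at hN
      refine hN.trans ?_
      gcongr
    have h4 : (q : ℝ) * b ≤ n * (b / k) + |b| := by
      have h5 : (n : ℝ) * (b / k) = q * b + (r / k) * b := by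
        rw [hnR]; field_simp
      have h6 : -|b| ≤ (r / k) * b := by
        have h7 : (r : ℝ) / k ≤ 1 := (div_le_one hk0).2 hrk
        have h8 : |(r / k : ℝ) * b| ≤ |b| := by
          rw [abs_mul, abs_of_nonneg (by positivity)]
          exact mul_le_of_le_one_left (abs_nonneg b) h7
        exact (abs_le.1 h8).1 |>.trans' (by linarith)
      linarith
    have h9 : (r : ℝ) * L ≤ k * L := by gcongr
    rw [inv_mul_le_iff₀ hn0]
    calc a n ≤ n * (b / k) + n * ε := by linarith
      _ = n * (b / k + ε) := by ring
  -- The sets `A` and `B` are empty together, hence both infima are `0` in that case.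
  rcases A.eq_empty_or_nonempty with hAe | hAne
  · have hBe : B = ∅ := by
      refine Set.eq_empty_of_forall_notMem fun b hb => ?_
      have := hBA b hb 1 one_pos
      rw [hAe] at this
      exact this
    simp [hAe, hBe]
  have hBne : B.Nonempty := hAne.imp' (fun b => (k : ℝ) * b) hAB
  by_cases hAbdd : BddBelow A
  · have hle : ∀ b ∈ B, k * sInf A ≤ b := by
      intro b hb
      rw [← le_div_iff₀' hk0]
      exact le_of_forall_pos_le_add fun ε hε => csInf_le hAbdd (hBA b hb ε hε)
    refine le_antisymm ?_ (le_csInf hBne hle)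
    rw [← div_le_iff₀' hk0]
    refine le_csInf hAne fun b hb => ?_
    rw [div_le_iff₀' hk0]
    exact csInf_le ⟨_, hle⟩ (hAB b hb)
  -- Otherwise neither set is bounded below, and `sInf` is `0` on both sides.
  · have hBbdd : ¬ BddBelow B := by
      rintro ⟨c, hc⟩
      refine hAbdd ⟨c / k, fun b hb => ?_⟩
      rw [div_le_iff₀' hk0]
      exact hc (hAB b hb)
    rw [Real.sInf_of_not_bddBelow hAbdd, Real.sInf_of_not_bddBelow hBbdd, mul_zero]

/-- `P(T^k, F_k, U_0^{k-1}, y) = k ⋅ P(T,F,U,y)` for `ν`-a.e. `y`, where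
`F_k = {f_{nk}}` and the left side is computed for the factor map `π : (X,T^k) → (Y,S^k)`. -/
theorem statement9
    (T : X → X) (S : Y → Y) (π : X → Y)
    (hT : Continuous T) (hTsurj : Function.Surjective T)
    (hS : Continuous S) (hSsurj : Function.Surjective S)
    (hπ : Continuous π) (hπsurj : Function.Surjective π)
    (hfac : π ∘ T = S ∘ π)
    (f : ℕ → X → ℝ) (hf : IsSubadditiveSeq T f)
    (U : Finset (Set X)) (hU : IsOpenCover U)
    (ν : Measure Y) (hνp : IsProbabilityMeasure ν) (hν : Measure.map S ν = ν)
    (k : ℕ) (hk : 1 ≤ k) :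
    ∀ᵐ y ∂ν, PFiber (T^[k]) π (fun n => f (n * k)) (dynCover T U k) y
      = (k : ℝ) * PFiber T π f U y := by
  refine Filter.Eventually.of_forall fun y => ?_
  have hTm : Measurable T := hT.measurable
  have hUB : IsBorelCover U := ⟨fun A hA => (hU.1 A hA).measurableSet, hU.2⟩
  obtain ⟨M, hM⟩ := (isCompact_range (hf.1 1 le_rfl)).bddAbove
  -- Replacing `M` by `max M 0` makes the growth constant at least `1`, so its log is nonnegative.
  have hM' : ∀ x, f 1 x ≤ max M 0 := fun x => (hM ⟨x, rfl⟩).trans (le_max_left _ _)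
  have hpos : ∀ n, 1 ≤ n → 0 < PnFiber T π f U n y := fun n hn =>
    PnFiber_pos hTm hπsurj hUB (hf.1 n hn) y
  have hK : 1 ≤ ((U.card : ℝ) + 1) * Real.exp (max M 0) := by
    have h1 : 1 ≤ Real.exp (max M 0) := Real.one_le_exp (le_max_right _ _)
    have h2 : (1 : ℝ) ≤ U.card + 1 := by simp
    exact one_le_mul_of_one_le_of_one_le h2 h1
  have key := limsup_mul_eq (fun n => Real.log (PnFiber T π f U n y)) (Real.log_nonneg hK)
    (fun n hn => by
      rw [← Real.log_mul (hpos n hn).ne' (by positivity)]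
      exact Real.log_le_log (hpos _ (by omega)) (PnFiber_succ_le hTm hf hUB hM' hn y)) hk
  have hP : ∀ n, PnFiber (T^[k]) π (fun n => f (n * k)) (dynCover T U k) n y
      = PnFiber T π f U (n * k) y := fun n => by
    simp only [PnFiber, dynCover_iterate]
  simpa only [PFiber, hP] using key

end RelLocVP

end
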